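/- Let A be a finite-dimensional F-algebra and I a proper two-sided ideal of A. Then there exists an S-nice subalgebra R of A such that I is an ideal of R. -/

import Mathlib

/-!
Let `A` act on a nonzero finite free `F`-module, and let `R` be the set of elements of `A` acting by
matrices with entries in `S`. A scalar acts by a scalar matrix, so `R ∩ F = S`; a common denominator
of the entries multiplies any element of `A` into `R`, so `RF = A`; and `R` contains the annihilator
of the module, since the zero matrix has entries in `S`. For the module `A ⧸ I`, the annihilator
contains `I`.
-/

section Span

variable {S F V : Type*} [CommSemiring S] [CommSemiring F] [Algebra S F] [AddCommMonoid V]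
  [Module S V] [Module F V] [IsScalarTower S F V]

theorem span_eq_top_iff_exists_smul_mem (M : Submonoid S) [IsLocalization M F]
    (N : Submodule S V) :
    Submodule.span F (N : Set V) = ⊤ ↔ ∀ v : V, ∃ s : M, s • v ∈ N := by
  refine ⟨fun h v ↦ ?_, fun h ↦ (Submodule.eq_top_iff').2 fun v ↦ ?_⟩
  · simpa only [Submodule.span_eq] using
      multiple_mem_span_of_mem_localization_span M F (N : Set V) v (h ▸ Submodule.mem_top)
  · obtain ⟨s, hs⟩ := h v
    have hsv : algebraMap S F s • v ∈ Submodule.span F (N : Set V) := by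
      rw [algebraMap_smul]
      exact Submodule.subset_span hs
    exact (Submodule.smul_mem_iff_of_isUnit _ (IsLocalization.map_units F s)).1 hsv

end Span

section Nice

variable {S A B : Type*} (F : Type*) [CommSemiring S] [CommSemiring F] [Algebra S F]
  [Semiring A] [Algebra F A] [Algebra S A]
  [Semiring B] [Algebra F B] [Algebra S B]

/-- An `S`-subalgebra `R` of an `F`-algebra `A` is `S`-nice if `R ∩ F = S` and `RF = A`. Here
`R ∩ F` is encoded as the preimage of `R` in `F`, and `RF` as the `F`-span of `R`. -/
structure IsNiceSubalgebra (R : Subalgebra S A) : Prop where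
  algebraMap_mem_iff (x : F) : algebraMap F A x ∈ R ↔ ∃ s : S, algebraMap S F s = x
  span_eq_top : Submodule.span F (R : Set A) = ⊤

variable {F} [IsScalarTower S F A] [IsScalarTower S F B]

theorem IsNiceSubalgebra.comap (M : Submonoid S) [IsLocalization M F] {R : Subalgebra S B}
    (hR : IsNiceSubalgebra F R) (f : A →ₐ[F] B) :
    IsNiceSubalgebra F (R.comap (f.restrictScalars S)) where
  algebraMap_mem_iff x := by
    simpa only [Subalgebra.mem_comap, AlgHom.restrictScalars_apply, AlgHom.commutes]
      using hR.algebraMap_mem_iff x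
  span_eq_top := by
    refine (span_eq_top_iff_exists_smul_mem M
      (Subalgebra.toSubmodule (R.comap (f.restrictScalars S)))).2 fun a ↦ ?_
    obtain ⟨s, hs⟩ :=
      (span_eq_top_iff_exists_smul_mem M (Subalgebra.toSubmodule R)).1 hR.span_eq_top (f a)
    have hmem : f.restrictScalars S ((s : S) • a) ∈ R := by
      rw [map_smul]
      exact hs
    exact ⟨s, hmem⟩

theorem isNiceSubalgebra_matrix_bot (M : Submonoid S) [IsLocalization M F] {n : Type*} [Fintype n]
    [DecidableEq n] [Nonempty n] :
    IsNiceSubalgebra F ((⊥ : Subalgebra S F).matrix : Subalgebra S (Matrix n n F)) where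
  algebraMap_mem_iff x := by
    have hdiag : algebraMap F (Matrix n n F) x = Matrix.diagonal fun _ ↦ x := rfl
    calc algebraMap F (Matrix n n F) x ∈ (⊥ : Subalgebra S F).matrix
        ↔ ∀ _ : n, x ∈ (⊥ : Subalgebra S F) :=
          hdiag ▸ Matrix.diagonal_mem_matrix_iff (zero_mem (⊥ : Subalgebra S F))
      _ ↔ ∃ s : S, algebraMap S F s = x := by rw [forall_const, Algebra.mem_bot, Set.mem_range]
  span_eq_top := by
    refine (span_eq_top_iff_exists_smul_mem M (Subalgebra.toSubmodule
      ((⊥ : Subalgebra S F).matrix : Subalgebra S (Matrix n n F)))).2 fun X ↦ ?_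
    obtain ⟨s, hs⟩ := IsLocalization.exist_integer_multiples_of_finite M
      fun p : n × n ↦ X p.1 p.2
    exact ⟨s, fun i j ↦ hs (i, j)⟩

end Nice

theorem exists_isNiceSubalgebra_annihilator_subset {S F A : Type*} (V : Type*) [CommSemiring S]
    [CommSemiring F] [Semiring A] [Algebra S F] [Algebra F A] [Algebra S A] [IsScalarTower S F A]
    (M : Submonoid S) [IsLocalization M F] [AddCommMonoid V] [Module F V] [Module A V]
    [IsScalarTower F A V] [Module.Free F V] [Module.Finite F V] [Nontrivial V] :
    ∃ R : Subalgebra S A, IsNiceSubalgebra F R ∧ (Module.annihilator A V : Set A) ⊆ R := by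
  classical
  let b := Module.Free.chooseBasis F V
  have := b.index_nonempty
  let f := (LinearMap.toMatrixAlgEquiv b).toAlgHom.comp (Algebra.lsmul F F V : A →ₐ[F] _)
  refine ⟨_, (isNiceSubalgebra_matrix_bot M).comap M f, fun a ha ↦ ?_⟩
  have hf : f a = 0 := by
    have hlsmul : Algebra.lsmul F F V a = 0 := LinearMap.ext (Module.mem_annihilator.1 ha)
    simp only [f, AlgHom.comp_apply, hlsmul, map_zero]
  simp [hf]

theorem stmt13_general {S F A : Type*} [CommRing S] [CommRing F] [Ring A]
    [Algebra S F] (M : Submonoid S) [IsLocalization M F] [Algebra F A] [Algebra S A]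
    [IsScalarTower S F A]
    (I : Submodule F A) [Module.Free F (A ⧸ I)] [Module.Finite F (A ⧸ I)]
    (hIideal : ∀ a ∈ I, ∀ x : A, x * a ∈ I ∧ a * x ∈ I) (hIne : I ≠ ⊤) :
    ∃ R : Subalgebra S A,
      (∀ x : F, algebraMap F A x ∈ R ↔ ∃ s : S, algebraMap S F s = x) ∧
      Submodule.span F (R : Set A) = ⊤ ∧
      (I : Set A) ⊆ (R : Set A) ∧
      (∀ r ∈ R, ∀ a ∈ I, r * a ∈ I ∧ a * r ∈ I) := by
  let J : Ideal A := { I with smul_mem' := fun x a ha ↦ (hIideal a ha x).1 }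
  let e : (A ⧸ I) ≃ₗ[F] A ⧸ J := Submodule.Quotient.restrictScalarsEquiv F J
  have : Module.Free F (A ⧸ J) := .of_equiv e
  have : Module.Finite F (A ⧸ J) := .equiv e
  have : Nontrivial (A ⧸ I) := Submodule.Quotient.nontrivial_iff.2 hIne
  have : Nontrivial (A ⧸ J) := e.symm.nontrivial
  obtain ⟨R, hR, hann⟩ :=
    exists_isNiceSubalgebra_annihilator_subset (S := S) (F := F) (A := A) (A ⧸ J) M
  have hI : (I : Set A) ⊆ Module.annihilator A (A ⧸ J) := fun a ha ↦
    Module.mem_annihilator.2 <| Submodule.Quotient.mk_surjective J |>.forall.2 fun x ↦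
      (Submodule.Quotient.mk_eq_zero J).2 (hIideal a ha x).2
  exact ⟨R, hR.algebraMap_mem_iff, hR.span_eq_top, hI.trans hann, fun r _ a ha ↦ hIideal a ha r⟩

/-- Let `A` be a finite-dimensional `F`-algebra and `I` a proper two-sided
ideal of `A`. Then there is an `S`-nice subalgebra `R` of `A` (`R ∩ F = S`, `RF = A`)
containing `I` as a two-sided ideal. -/
theorem stmt13 {S F A : Type*} [CommRing S] [IsDomain S] [Field F] [Ring A] [Nontrivial A]
    [Algebra S F] [IsFractionRing S F] [Algebra F A] [Algebra S A] [IsScalarTower S F A]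
    [FiniteDimensional F A]
    (hS : ¬ IsField S)
    (I : Submodule F A) (hIideal : ∀ a ∈ I, ∀ x : A, x * a ∈ I ∧ a * x ∈ I)
    (hIne : I ≠ ⊤) :
    ∃ R : Subalgebra S A,
      (∀ x : F, algebraMap F A x ∈ R ↔ ∃ s : S, algebraMap S F s = x) ∧
      Submodule.span F (R : Set A) = ⊤ ∧
      (I : Set A) ⊆ (R : Set A) ∧
      (∀ r ∈ R, ∀ a ∈ I, r * a ∈ I ∧ a * r ∈ I) := by
  exact stmt13_general (nonZeroDivisors S) I hIideal hIne
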